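/- Let t0 < t1, α ∈ (0,1) and r ∈ (1/(1−α), ∞). Then there exists a nonnegative f ∈ L^1(t0,t1;ℝ) such that J^α f (which is defined almost everywhere on (t0,t1)) does NOT belong to weak-L^r(t0,t1;ℝ): sup_{λ>0} λ^r · μ{t ∈ (t0,t1) : J^α f(t) > λ} = ∞. In particular J^α(L^1(t0,t1;ℝ)) ⊄ L^r_w(t0,t1;ℝ). -/

import Mathlib

open MeasureTheory Set

/-- The Riemann–Liouville fractional integral of order `α` at `t0`:
`J^α f(t) = (1/Γ(α)) ∫_{t0}^{t} (t−s)^{α−1} f(s) ds`, with the conventions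
`J^0 f = f` and (since the interval integral from `t0` to `t0` vanishes)
`J^α f(t0) = 0`. -/
noncomputable def RL {X : Type*} [NormedAddCommGroup X] [NormedSpace ℝ X] (t0 α : ℝ)
    (f : ℝ → X) (t : ℝ) : X :=
  if α = 0 then f t
  else (1 / Real.Gamma α) • ∫ s in t0..t, (t - s) ^ (α - 1) • f s

lemma rl_aux_int (t0 t1 γ : ℝ) (h : γ < 1) (ht : t0 ≤ t1) :
    IntervalIntegrable (fun s => |s - t0| ^ (-γ)) volume t0 t1 := by
  have h1 : IntervalIntegrable (fun x : ℝ => x ^ (-γ)) volume 0 (t1 - t0) :=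
    intervalIntegral.intervalIntegrable_rpow' (by linarith)
  have h2 := h1.comp_sub_right t0
  simp only [zero_add, sub_add_cancel] at h2
  refine h2.congr ?_
  intro s hs
  rw [uIoc_of_le ht] at hs
  simp only
  rw [abs_of_pos (by linarith [hs.1])]

lemma rl_aux_int2 (t0 t a : ℝ) (h : -1 < a) :
    IntervalIntegrable (fun s => (t - s) ^ a) volume t0 t := by
  have h1 : IntervalIntegrable (fun x : ℝ => x ^ a) volume (t - t0) 0 :=
    intervalIntegral.intervalIntegrable_rpow' h
  have h2 := h1.comp_sub_left t
  simpa using h2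

lemma rl_aux_prod (t0 t α γ : ℝ) (hα0 : 0 < α) (hα1 : α < 1) (hg0 : 0 < γ) (hg : γ < 1)
    (ht : t0 < t) :
    IntervalIntegrable (fun s => (t - s) ^ (α - 1) • |s - t0| ^ (-γ)) volume t0 t := by
  set k := (t - t0) / 2 with hk
  have hkpos : 0 < k := by rw [hk]; linarith
  have hd := ((rl_aux_int t0 t γ hg ht.le).const_mul (k ^ (α - 1))).add
    ((rl_aux_int2 t0 t (α - 1) (by linarith)).const_mul (k ^ (-γ)))
  refine hd.mono_fun (by
    apply Measurable.aestronglyMeasurable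
    simp only [smul_eq_mul]
    fun_prop) ?_
  rw [uIoc_of_le ht.le]
  filter_upwards [ae_restrict_mem measurableSet_Ioc] with s hs
  have h1 : 0 ≤ (t - s) ^ (α - 1) := Real.rpow_nonneg (by linarith [hs.2]) _
  have h2 : 0 ≤ |s - t0| ^ (-γ) := Real.rpow_nonneg (abs_nonneg _) _
  have h3 : 0 ≤ k ^ (α - 1) := Real.rpow_nonneg hkpos.le _
  have h4 : 0 ≤ k ^ (-γ) := Real.rpow_nonneg hkpos.le _
  simp only [smul_eq_mul, Pi.add_apply]
  rw [Real.norm_of_nonneg (by positivity), Real.norm_of_nonneg (by positivity)]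
  rcases le_total k (t - s) with hc | hc
  · have : (t - s) ^ (α - 1) ≤ k ^ (α - 1) :=
      Real.rpow_le_rpow_of_nonpos hkpos hc (by linarith)
    nlinarith [mul_le_mul_of_nonneg_right this h2, mul_nonneg h4 h1]
  · have : |s - t0| ^ (-γ) ≤ k ^ (-γ) := by
      rw [abs_of_pos (by linarith [hs.1])]
      exact Real.rpow_le_rpow_of_nonpos hkpos (by linarith) (by linarith)
    nlinarith [mul_le_mul_of_nonneg_right this h1, mul_nonneg h3 h2]

lemma rl_aux_lower (t0 t α γ : ℝ) (hα0 : 0 < α) (hα1 : α < 1) (hg0 : 0 < γ) (hg : γ < 1)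
    (ht : t0 < t) :
    (1 / Real.Gamma α) * (t - t0) ^ (-(γ - α)) ≤ RL t0 α (fun s => |s - t0| ^ (-γ)) t := by
  have hh : 0 < t - t0 := by linarith
  have hG := Real.Gamma_pos_of_pos hα0
  rw [RL, if_neg hα0.ne', smul_eq_mul]
  refine mul_le_mul_of_nonneg_left ?_ (by positivity)
  have h1 : ∫ s in t0..t, (t - t0) ^ (α - 1) * (t - t0) ^ (-γ) = (t - t0) ^ (-(γ - α)) := by
    rw [intervalIntegral.integral_const, smul_eq_mul, ← Real.rpow_add hh]
    nth_rewrite 1 [← Real.rpow_one (t - t0)]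
    rw [← Real.rpow_add hh]
    congr 1
    ring
  rw [← h1]
  refine intervalIntegral.integral_mono_on_of_le_Ioo ht.le (by simp)
    (rl_aux_prod t0 t α γ hα0 hα1 hg0 hg ht) ?_
  intro s hs
  simp only [smul_eq_mul]
  have a1 : (t - t0) ^ (α - 1) ≤ (t - s) ^ (α - 1) :=
    Real.rpow_le_rpow_of_nonpos (by linarith [hs.2]) (by linarith [hs.1]) (by linarith)
  have a2 : (t - t0) ^ (-γ) ≤ |s - t0| ^ (-γ) := by
    rw [abs_of_pos (by linarith [hs.1])]
    exact Real.rpow_le_rpow_of_nonpos (by linarith [hs.1]) (by linarith [hs.2]) (by linarith)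
  exact mul_le_mul a1 a2 (Real.rpow_nonneg hh.le _) (Real.rpow_nonneg (by linarith [hs.2]) _)

/-- For `t0 < t1`, `α ∈ (0,1)` and `r ∈ (1/(1−α), ∞)`, there exists a
nonnegative `f ∈ L^1(t0,t1;ℝ)` such that `J^α f` does NOT belong to
weak-`L^r(t0,t1;ℝ)`: `sup_{λ>0} λ^r μ{t ∈ (t0,t1) : J^α f(t) > λ} = ∞`. -/
theorem rl_l1_not_in_weak_lr (t0 t1 α r : ℝ) (ht : t0 < t1) (hα0 : 0 < α)
    (hα1 : α < 1) (hr : 1 / (1 - α) < r) :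
    ∃ f : ℝ → ℝ, (∀ t, 0 ≤ f t) ∧ IntegrableOn f (Ioc t0 t1) ∧
      ∀ C : ℝ, ∃ lam : ℝ, 0 < lam ∧
        C < lam ^ r * (volume {t ∈ Ioo t0 t1 | lam < RL t0 α f t}).toReal := by
  have h1a : 0 < 1 - α := by linarith
  have hr0 : 0 < r := lt_trans (by positivity) hr
  have hir : α + 1 / r < 1 := by
    have := (one_div_lt h1a hr0).1 hr
    linarith
  obtain ⟨γ, hγ, hγ1⟩ := exists_between hir
  have hrinv : 0 < 1 / r := by positivity
  have hg0 : 0 < γ := by linarith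
  have hprod : 1 < r * (γ - α) := by
    have : 1 / r < γ - α := by linarith
    rwa [div_lt_iff₀' hr0] at this
  refine ⟨fun s => |s - t0| ^ (-γ), fun t => Real.rpow_nonneg (abs_nonneg _) _,
    (intervalIntegrable_iff_integrableOn_Ioc_of_le ht.le).1 (rl_aux_int t0 t1 γ hγ1 ht.le), ?_⟩
  intro C
  have hG := Real.Gamma_pos_of_pos hα0
  set c := 1 / Real.Gamma α with hc
  have hcpos : 0 < c := by positivity
  have hlim : Filter.Tendsto (fun δ : ℝ => (c / 2) ^ r * δ ^ (-(r * (γ - α) - 1)))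
      (nhdsWithin 0 (Ioi 0)) Filter.atTop :=
    (tendsto_rpow_neg_nhdsGT_zero (by linarith)).const_mul_atTop (by positivity)
  have hev : ∀ᶠ δ in nhdsWithin (0 : ℝ) (Ioi 0), δ ∈ Ioo 0 (t1 - t0) :=
    Ioo_mem_nhdsGT (by linarith)
  obtain ⟨δ, hδC, hδ0, hδ1⟩ := ((hlim.eventually_gt_atTop C).and hev).exists
  refine ⟨c / 2 * δ ^ (-(γ - α)), by positivity, hδC.trans_le ?_⟩
  have hsub : Ioo t0 (t0 + δ) ⊆
      {t ∈ Ioo t0 t1 | c / 2 * δ ^ (-(γ - α)) < RL t0 α (fun s => |s - t0| ^ (-γ)) t} := by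
    intro t hts
    refine ⟨⟨hts.1, by linarith [hts.2]⟩, ?_⟩
    refine lt_of_lt_of_le ?_ (rl_aux_lower t0 t α γ hα0 hα1 hg0 hγ1 hts.1)
    have : δ ^ (-(γ - α)) ≤ (t - t0) ^ (-(γ - α)) :=
      Real.rpow_le_rpow_of_nonpos (by linarith [hts.1]) (by linarith [hts.2]) (by linarith)
    have hp : 0 < δ ^ (-(γ - α)) := by positivity
    rw [← hc]
    nlinarith
  have hvol : δ ≤ (volume {t ∈ Ioo t0 t1 |
      c / 2 * δ ^ (-(γ - α)) < RL t0 α (fun s => |s - t0| ^ (-γ)) t}).toReal := by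
    have hfin : volume {t ∈ Ioo t0 t1 |
      c / 2 * δ ^ (-(γ - α)) < RL t0 α (fun s => |s - t0| ^ (-γ)) t} ≠ ⊤ :=
      ((measure_mono (sep_subset _ _)).trans_lt (by simp : volume (Ioo t0 t1) < ⊤)).ne
    have := ENNReal.toReal_mono hfin (measure_mono hsub)
    simpa [hδ0.le] using this
  refine le_trans (le_of_eq ?_) (mul_le_mul_of_nonneg_left hvol (by positivity))
  rw [Real.mul_rpow (by positivity) (by positivity), ← Real.rpow_mul hδ0.le, mul_assoc]
  congr 1
  nth_rewrite 3 [← Real.rpow_one δ]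
  rw [← Real.rpow_add hδ0]
  congr 1
  ring
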